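/- arXiv:2303.07793 — 2 statements merged into one kernel-verified Lean document; each statement's English description precedes it below -/
import Mathlib

section
/- Let g : ℝ^n → ℝ^p be a map and M ⊆ ℝ^p a nonempty set such that g is M-nearly convex. Then ri(epi_M(g)) = {(x, y) ∈ ℝ^n × ℝ^p | y − g(x) ∈ ri M}. -/
/-!
Write `E` for the epigraph and let `C` be convex with `C ⊆ E ⊆ closure C`.

The inclusion `⊆` only uses that the slice of `E` over `x` is the translate `g x + M`, so that
`aff E` contains the corresponding translate of `aff M`.

For `⊇`, the accessibility lemma (`combo_mem_ri`: a half-open segment from a point of `ri C` to a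
point of `closure C` stays in `ri C`) shows that `ri C` is convex and dense in `closure C ⊇ E`.
Since `M` is nonempty, `E` projects onto all of `ℝ^n`, so the projection of `ri C` is convex and
dense in `ℝ^n`, hence everything (`eq_univ_of_convex_of_dense`). Thus every slice contains a point
`(x, y₀)` of `ri C`. If `y - g x ∈ ri M`, the segment from `y₀` to `y` can be prolonged slightly
beyond `y` inside `g x + M`; accessibility then puts `(x, y)` in `ri C ⊆ ri E`.
-/

open Set Metric

noncomputable section

/-- A set is *nearly convex* if it lies between a convex set and its closure. -/
def NearlyConvex {E : Type*} [NormedAddCommGroup E] [NormedSpace ℝ E] (s : Set E) : Prop :=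
  ∃ C : Set E, Convex ℝ C ∧ C ⊆ s ∧ s ⊆ closure C

/-- The *relative interior* of a set: points `a ∈ s` admitting `δ > 0` with
`B(a,δ) ∩ aff s ⊆ s`. -/
def ri {E : Type*} [NormedAddCommGroup E] [NormedSpace ℝ E] (s : Set E) : Set E :=
  {a | a ∈ s ∧ ∃ δ > 0, Metric.ball a δ ∩ (affineSpan ℝ s : Set E) ⊆ s}

section RelativeInterior

variable {E : Type*} [NormedAddCommGroup E] [NormedSpace ℝ E]

theorem combination_mem_affineSubspace (A : AffineSubspace ℝ E) {a b : E} (ha : a ∈ A)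
    (hb : b ∈ A) (t : ℝ) : t • a + (1 - t) • b ∈ A := by
  have h := AffineMap.lineMap_mem t hb ha
  rwa [AffineMap.lineMap_apply_module, add_comm] at h

theorem closure_subset_affineSpan [FiniteDimensional ℝ E] (C : Set E) :
    closure C ⊆ (affineSpan ℝ C : Set E) :=
  closure_minimal (subset_affineSpan ℝ C)
    (AffineSubspace.closed_of_finiteDimensional (affineSpan ℝ C))

/-- Accessibility: the half-open segment from a relative interior point of a convex set to a
point of its closure consists of relative interior points. -/
theorem combo_mem_ri [FiniteDimensional ℝ E] {C : Set E} (hC : Convex ℝ C) {a b : E}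
    (ha : a ∈ ri C) (hb : b ∈ closure C) {t : ℝ} (ht : 0 < t) (ht1 : t ≤ 1) :
    t • a + (1 - t) • b ∈ ri C := by
  obtain ⟨haC, δ, hδ, hball⟩ := ha
  obtain ⟨b', hb', hbb'⟩ := Metric.mem_closure_iff.1 hb (t * δ / 2) (by positivity)
  have key : ball (t • a + (1 - t) • b) (t * δ / 2) ∩ (affineSpan ℝ C : Set E) ⊆ C := by
    rintro w ⟨hw, hwA⟩
    -- `w = t • a' + (1 - t) • b'` with `a'` close to `a` and still in the affine span.
    set a' : E := t⁻¹ • w + (1 - t⁻¹) • b' with ha'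
    have ha'A : a' ∈ affineSpan ℝ C :=
      combination_mem_affineSubspace _ hwA (subset_affineSpan ℝ C hb') _
    have hdiff : a' - a = t⁻¹ • ((w - (t • a + (1 - t) • b)) + (1 - t) • (b - b')) := by
      rw [ha']
      match_scalars <;> field_simp <;> ring
    have hnorm : ‖a' - a‖ < δ := by
      rw [hdiff, norm_smul, norm_inv, Real.norm_of_nonneg ht.le, inv_mul_lt_iff₀ ht]
      have h1 : ‖w - (t • a + (1 - t) • b)‖ < t * δ / 2 := by
        rwa [mem_ball, dist_eq_norm] at hw
      have h2 : ‖(1 - t) • (b - b')‖ ≤ ‖b - b'‖ := by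
        rw [norm_smul, Real.norm_of_nonneg (by linarith)]
        exact mul_le_of_le_one_left (norm_nonneg _) (by linarith)
      rw [dist_eq_norm] at hbb'
      have h3 := norm_add_le (w - (t • a + (1 - t) • b)) ((1 - t) • (b - b'))
      linarith
    have ha'C : a' ∈ C := hball ⟨by rwa [mem_ball, dist_eq_norm], ha'A⟩
    have hwe : w = t • a' + (1 - t) • b' := by
      rw [ha']
      match_scalars <;> field_simp <;> ring
    rw [hwe]
    exact hC ha'C hb' ht.le (by linarith) (by ring)
  refine ⟨key ⟨mem_ball_self (by positivity), ?_⟩, _, by positivity, key⟩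
  exact combination_mem_affineSubspace _ (subset_affineSpan ℝ C haC)
    (closure_subset_affineSpan C hb) t

theorem ri_nonempty [FiniteDimensional ℝ E] {C : Set E} (hC : Convex ℝ C) (hne : C.Nonempty) :
    (ri C).Nonempty := by
  obtain ⟨_, y, hy, rfl⟩ := hne.intrinsicInterior hC
  obtain ⟨δ, hδ, h⟩ := Metric.mem_nhds_iff.1 (mem_interior_iff_mem_nhds.1 hy)
  have hyC : y ∈ ((↑) ⁻¹' C : Set (affineSpan ℝ C)) := interior_subset hy
  exact ⟨y, hyC, δ, hδ, fun z hz => @h ⟨z, hz.2⟩ hz.1⟩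

theorem convex_ri [FiniteDimensional ℝ E] {C : Set E} (hC : Convex ℝ C) : Convex ℝ (ri C) := by
  refine convex_iff_forall_pos.2 fun a ha b hb s t hs ht hst => ?_
  obtain rfl : t = 1 - s := by linarith
  exact combo_mem_ri hC ha (subset_closure hb.1) hs (by linarith)

theorem closure_subset_closure_ri [FiniteDimensional ℝ E] {C : Set E} (hC : Convex ℝ C) :
    closure C ⊆ closure (ri C) := by
  intro b hb
  obtain ⟨a, ha⟩ := ri_nonempty hC (closure_nonempty_iff.1 ⟨b, hb⟩)
  have hcont : Continuous fun t : ℝ => t • a + (1 - t) • b := by fun_prop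
  have hlim : Filter.Tendsto (fun t : ℝ => t • a + (1 - t) • b) (nhdsWithin 0 (Ioi 0))
      (nhds b) := by
    have h := (hcont.tendsto 0).mono_left (nhdsWithin_le_nhds (s := Ioi 0))
    simpa using h
  refine mem_closure_of_tendsto hlim ?_
  filter_upwards [Ioc_mem_nhdsGT (zero_lt_one' ℝ)] with t ht
  exact combo_mem_ri hC ha hb ht.1 ht.2

theorem ri_subset_ri_of_subset_closure [FiniteDimensional ℝ E] {C s : Set E} (hCs : C ⊆ s)
    (hsC : s ⊆ closure C) : ri C ⊆ ri s := by
  rintro a ⟨haC, δ, hδ, h⟩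
  have hspan : affineSpan ℝ s ≤ affineSpan ℝ C :=
    affineSpan_le.2 (hsC.trans (closure_subset_affineSpan C))
  exact ⟨hCs haC, δ, hδ, fun z hz => hCs (h ⟨hz.1, hspan hz.2⟩)⟩

theorem eq_univ_of_convex_of_dense [FiniteDimensional ℝ E] {D : Set E} (hD : Convex ℝ D)
    (hdense : ∀ x, x ∈ closure D) : D = univ := by
  have hspan : affineSpan ℝ D = ⊤ :=
    top_le_iff.1 fun x _ => closure_subset_affineSpan D (hdense x)
  obtain ⟨c, hc⟩ := hD.interior_nonempty_iff_affineSpan_eq_top.2 hspan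
  refine eq_univ_of_forall fun x => ?_
  -- `x` is the midpoint of the interior point `c` and its reflection `2x - c`.
  refine interior_subset (hD.openSegment_interior_closure_subset_interior hc
    (hdense ((2 : ℝ) • x - c)) ⟨1 / 2, 1 / 2, by norm_num, by norm_num, by norm_num, ?_⟩)
  module

/-- A relative interior point `m` can be passed slightly when coming from any `m₀ ∈ M`. -/
theorem exists_prolongation {M : Set E} {m m₀ : E} (hm : m ∈ ri M) (hm₀ : m₀ ∈ M) :
    ∃ ε > (0 : ℝ), (1 + ε) • m + (1 - (1 + ε)) • m₀ ∈ M := by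
  obtain ⟨hmM, δ, hδ, h⟩ := hm
  have hcont : Continuous fun ε : ℝ => (1 + ε) • m + (1 - (1 + ε)) • m₀ := by fun_prop
  have hnear : ∀ᶠ ε in nhdsWithin (0 : ℝ) (Ioi 0),
      (1 + ε) • m + (1 - (1 + ε)) • m₀ ∈ ball m δ := by
    have h0 := (hcont.tendsto 0).mono_left (nhdsWithin_le_nhds (s := Ioi 0))
    simp only [add_zero, one_smul, sub_self, zero_smul] at h0
    exact h0 (ball_mem_nhds m hδ)
  obtain ⟨ε, hε, hpos⟩ := (hnear.and self_mem_nhdsWithin).exists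
  exact ⟨ε, hpos, h ⟨hε, combination_mem_affineSubspace _ (subset_affineSpan ℝ M hmM)
    (subset_affineSpan ℝ M hm₀) _⟩⟩

end RelativeInterior

theorem ri_epiM (n p : ℕ) (g : EuclideanSpace ℝ (Fin n) → EuclideanSpace ℝ (Fin p))
    (M : Set (EuclideanSpace ℝ (Fin p))) (hM : M.Nonempty)
    (hg : NearlyConvex {q : EuclideanSpace ℝ (Fin n) × EuclideanSpace ℝ (Fin p) |
      q.2 - g q.1 ∈ M}) :
    ri {q : EuclideanSpace ℝ (Fin n) × EuclideanSpace ℝ (Fin p) | q.2 - g q.1 ∈ M} =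
      {q : EuclideanSpace ℝ (Fin n) × EuclideanSpace ℝ (Fin p) | q.2 - g q.1 ∈ ri M} := by
  set S := {q : EuclideanSpace ℝ (Fin n) × EuclideanSpace ℝ (Fin p) | q.2 - g q.1 ∈ M} with hS
  apply Subset.antisymm
  · rintro ⟨x, y⟩ ⟨hxy, δ, hδ, h⟩
    refine ⟨hxy, δ, hδ, ?_⟩
    rintro z ⟨hz, hzM⟩
    -- The affine embedding `w ↦ (x, w + g x)` maps `M` into `S`, hence `aff M` into `aff S`.
    let φ : EuclideanSpace ℝ (Fin p) →ᵃ[ℝ] EuclideanSpace ℝ (Fin n) × EuclideanSpace ℝ (Fin p) :=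
      (AffineMap.const ℝ _ x).prod (AffineMap.id ℝ _ + AffineMap.const ℝ _ (g x))
    have hφ : ∀ w, φ w = (x, w + g x) := fun w => rfl
    have hspan : affineSpan ℝ M ≤ (affineSpan ℝ S).comap φ := by
      refine affineSpan_le.2 fun w hw => ?_
      have hwS : φ w ∈ S := by
        rw [hφ, hS]
        simpa using hw
      exact subset_affineSpan ℝ S hwS
    have hzS : (x, z + g x) ∈ S := by
      refine h ⟨?_, hspan hzM⟩
      rw [mem_ball, Prod.dist_eq, dist_self, max_lt_iff]
      refine ⟨hδ, ?_⟩
      rw [mem_ball, dist_eq_norm] at hz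
      rw [dist_eq_norm]
      have heq : z + g x - y = z - (y - g x) := by abel
      exact heq ▸ hz
    rw [hS] at hzS
    simpa using hzS
  · rintro ⟨x, y⟩ hxy
    obtain ⟨C, hC, hCS, hSC⟩ := hg
    have hproj : Prod.fst '' ri C = (univ : Set (EuclideanSpace ℝ (Fin n))) := by
      refine eq_univ_of_convex_of_dense
        ((convex_ri hC).linear_image (LinearMap.fst ℝ _ _)) fun u => ?_
      obtain ⟨m, hm⟩ := hM
      have hu : (u, m + g u) ∈ S := by
        rw [hS]
        simpa using hm
      exact image_closure_subset_closure_image continuous_fst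
        ⟨_, closure_subset_closure_ri hC (hSC hu), rfl⟩
    obtain ⟨⟨x', y₀⟩, hq, hx'⟩ : x ∈ Prod.fst '' ri C := hproj ▸ mem_univ x
    obtain rfl : x' = x := hx'
    have hm₀ : y₀ - g x' ∈ M := hCS hq.1
    obtain ⟨ε, hε, hmem⟩ := exists_prolongation hxy hm₀
    have hy₁ : (x', (1 + ε) • y + (1 - (1 + ε)) • y₀) ∈ S := by
      rw [hS, mem_ofPred_eq]
      convert hmem using 1
      simp only
      module
    have hpos : 0 < 1 + ε := by linarith
    -- `y` divides the segment from `y₀` to the prolonged point in the ratio `1 : ε`.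
    have hri := combo_mem_ri hC hq (hSC hy₁) (t := ε / (1 + ε)) (by positivity)
      ((div_le_one hpos).2 (by linarith))
    refine ri_subset_ri_of_subset_closure hCS hSC ?_
    convert hri using 1
    ext1
    · simp only [Prod.fst_add, Prod.smul_fst]
      module
    · simp only [Prod.snd_add, Prod.smul_snd]
      match_scalars <;> field_simp <;> ring
end
end

section
/- Let F : ℝ^n ⇒ ℝ^p be a nearly convex set-valued mapping and let Ω ⊆ ℝ^n be a nearly convex set with ri(dom F) ∩ ri Ω ≠ ∅. Then the restriction F_Ω (defined by F_Ω(x) = F(x) if x ∈ Ω and F_Ω(x) = ∅ otherwise) is a nearly convex set-valued mapping, and ri(gph F_Ω) = {(x, y) ∈ ℝ^n × ℝ^p | x ∈ ri(dom F) ∩ ri Ω and y ∈ ri F(x)}. -/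
/-!
The proof rests on one notion: a subset `D ⊆ S` *absorbs* `S` when every half-open segment from a
point of `D` towards a point of `S` (the end in `S` excluded) stays in `D`.

* For nearly convex `S` in finite dimension, `ri S` absorbs `S` (`segAbsorbs_ri`), and `ri S` is
  nonempty if `S` is (`ri_nonempty`). Conversely, a set absorbed by a nonempty subset is nearly
  convex (`SegAbsorbs.nearlyConvex`).
* Hence `a ∈ ri S` iff every segment from a point `b ∈ S` to `a` can be prolonged beyond `a`
  within `S` (`exists_prolong`, `mem_ri_of_prolong`). More generally, if such a segment starts in
  an absorbing set `D`, then `a ∈ D` (`SegAbsorbs.mem_of_prolong`).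

With `D = {(x, y) ∈ ri (gph F) | x ∈ ri Ω}`, the constraint qualification makes `D` nonempty, and
`D` absorbs `gph F_Ω`, which gives near convexity. Prolonging segments that start in `D` gives
`ri (gph F_Ω) = D`. The same argument on fibres identifies `ri (gph F)` with the set of `(x, y)`
such that `x ∈ ri (dom F)` and `y ∈ ri (F x)` (`mem_ri_gph_iff`).
-/

open Set Metric

noncomputable section

/-- The graph of a set-valued mapping. -/
def gph {E P : Type*} (F : E → Set P) : Set (E × P) := {q | q.2 ∈ F q.1}

/-- The domain of a set-valued mapping. -/
def domSV {E P : Type*} (F : E → Set P) : Set E := {x | (F x).Nonempty}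

section NearlyConvexSets

variable {E : Type*} [NormedAddCommGroup E] [NormedSpace ℝ E]

/-- `D ⊆ S`, and for `a ∈ D` and `b ∈ S` the segment from `a` to `b`, without its endpoint `b`,
lies in `D`. -/
def SegAbsorbs (D S : Set E) : Prop :=
  D ⊆ S ∧ ∀ a ∈ D, ∀ b ∈ S, ∀ t : ℝ, 0 < t → t ≤ 1 → t • a + (1 - t) • b ∈ D

theorem SegAbsorbs.nearlyConvex {D S : Set E} (h : SegAbsorbs D S) (hD : D.Nonempty) :
    NearlyConvex S := by
  obtain ⟨hDS, h⟩ := h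
  refine ⟨D, ?_, hDS, ?_⟩
  · intro a ha b hb s t hs ht hst
    obtain rfl : t = 1 - s := by linarith
    rcases hs.eq_or_lt with rfl | hs
    · simpa using hb
    · exact h a ha b (hDS hb) s hs (by linarith)
  · intro b hb
    obtain ⟨a, ha⟩ := hD
    have hseg : openSegment ℝ a b ⊆ D := by
      rintro _ ⟨s, t, hs, ht, hst, rfl⟩
      obtain rfl : t = 1 - s := by linarith
      exact h a ha b hb s hs (by linarith)
    exact closure_mono hseg (segment_subset_closure_openSegment (right_mem_segment ℝ a b))

/-- If the segment from `b ∈ D` to `a` can be prolonged beyond `a` within `S`, then `a ∈ D`. -/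
theorem SegAbsorbs.mem_of_prolong {D S : Set E} (h : SegAbsorbs D S) {a b : E} (hb : b ∈ D) {ε : ℝ}
    (hε : 0 < ε) (hab : a + ε • (a - b) ∈ S) : a ∈ D := by
  have := h.2 b hb _ hab (ε / (1 + ε)) (by positivity)
    ((div_le_one (by positivity)).2 (by linarith))
  convert this using 1
  have h1 : (1 - ε / (1 + ε)) = (1 + ε)⁻¹ := by field_simp; ring
  have h2 : a = (1 + ε)⁻¹ • ((1 + ε) • a) := by
    rw [smul_smul, inv_mul_cancel₀ (by positivity), one_smul]
  rw [h1]
  nth_rewrite 1 [h2]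
  module

/-- From a relative interior point, every segment can be prolonged by any small enough amount. -/
theorem exists_prolong {S : Set E} {a b : E} (ha : a ∈ ri S) (hb : b ∈ S) :
    ∃ ε₀ > 0, ∀ ε : ℝ, 0 < ε → ε ≤ ε₀ → a + ε • (a - b) ∈ S := by
  obtain ⟨haS, δ, hδ, hball⟩ := ha
  refine ⟨δ / (2 * (‖a - b‖ + 1)), by positivity, fun ε hε hle => hball ⟨?_, ?_⟩⟩
  · rw [mem_ball, dist_eq_norm, add_sub_cancel_left, norm_smul, Real.norm_of_nonneg hε.le]
    rw [le_div_iff₀ (by positivity)] at hle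
    nlinarith [norm_nonneg (a - b)]
  · have := AffineMap.lineMap_mem (Q := affineSpan ℝ S) (1 + ε) (subset_affineSpan ℝ S hb)
      (subset_affineSpan ℝ S haS)
    rw [AffineMap.lineMap_apply_module] at this
    have e : a + ε • (a - b) = (1 - (1 + ε)) • b + (1 + ε) • a := by module
    rwa [e]

variable [FiniteDimensional ℝ E]

theorem affineSpan_eq_of_sandwich {S C : Set E} (hCS : C ⊆ S) (hSC : S ⊆ closure C) :
    affineSpan ℝ S = affineSpan ℝ C :=
  le_antisymm
    (affineSpan_le.2 (hSC.trans (closure_minimal (subset_affineSpan ℝ C)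
      (affineSpan ℝ C).closed_of_finiteDimensional)))
    (affineSpan_mono ℝ hCS)

theorem ri_nonempty_of_convex {C : Set E} (hC : Convex ℝ C) (hne : C.Nonempty) :
    (ri C).Nonempty := by
  obtain ⟨x, hx⟩ := hne.intrinsicInterior hC
  refine ⟨x, intrinsicInterior_subset hx, ?_⟩
  obtain ⟨y, hy, rfl⟩ := mem_intrinsicInterior.1 hx
  obtain ⟨δ, hδ, hball⟩ := Metric.mem_nhds_iff.1 (mem_interior_iff_mem_nhds.1 hy)
  exact ⟨δ, hδ, fun z hz => @hball ⟨z, hz.2⟩ hz.1⟩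

/-- The accessibility lemma for a convex set: relative interior points absorb even the closure. -/
theorem combo_mem_ri_of_convex {C : Set E} (hC : Convex ℝ C) {a b : E} (ha : a ∈ ri C)
    (hb : b ∈ closure C) {t : ℝ} (ht : 0 < t) (ht1 : t ≤ 1) : t • a + (1 - t) • b ∈ ri C := by
  obtain ⟨haC, δ, hδ, hball⟩ := ha
  obtain ⟨b', hb', hbb'⟩ := Metric.mem_closure_iff.1 hb (t * δ / 2) (by positivity)
  -- A point `w` near the combination equals `t • u + (1 - t) • b'` with `u` close to `a`.
  have key : Metric.ball (t • a + (1 - t) • b) (t * δ / 2) ∩ (affineSpan ℝ C : Set E) ⊆ C := by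
    rintro w ⟨hw, hwA⟩
    have hu : AffineMap.lineMap b' w t⁻¹ ∈ C := by
      refine hball ⟨?_, AffineMap.lineMap_mem _ (subset_affineSpan ℝ C hb') hwA⟩
      rw [mem_ball, dist_eq_norm] at hw ⊢
      rw [dist_eq_norm] at hbb'
      have hne : t ≠ 0 := ht.ne'
      have e : (AffineMap.lineMap b' w t⁻¹ : E) - a =
          t⁻¹ • ((w - (t • a + (1 - t) • b)) + (1 - t) • (b - b')) := by
        have h2 : a = t⁻¹ • t • a := by rw [smul_smul, inv_mul_cancel₀ hne, one_smul]
        have h3 : b' = t⁻¹ • t • b' := by rw [smul_smul, inv_mul_cancel₀ hne, one_smul]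
        rw [AffineMap.lineMap_apply_module, sub_smul, one_smul]
        nth_rewrite 1 [h2, h3]
        module
      rw [e, norm_smul, Real.norm_of_nonneg (by positivity), inv_mul_lt_iff₀ ht]
      have h4 : ‖(1 - t) • (b - b')‖ ≤ ‖b - b'‖ := by
        rw [norm_smul, Real.norm_of_nonneg (by linarith)]
        nlinarith [norm_nonneg (b - b')]
      linarith [norm_add_le (w - (t • a + (1 - t) • b)) ((1 - t) • (b - b'))]
    have := hC hu hb' ht.le (by linarith : 0 ≤ 1 - t) (by ring)
    convert this using 1
    rw [AffineMap.lineMap_apply_module, smul_add, smul_smul, smul_smul, mul_sub,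
      mul_inv_cancel₀ ht.ne']
    module
  have hmem : t • a + (1 - t) • b ∈ affineSpan ℝ C := by
    have hbA := closure_minimal (subset_affineSpan ℝ C)
      (affineSpan ℝ C).closed_of_finiteDimensional hb
    have := AffineMap.lineMap_mem (Q := affineSpan ℝ C) t hbA (subset_affineSpan ℝ C haC)
    rwa [AffineMap.lineMap_apply_module, add_comm] at this
  exact ⟨key ⟨mem_ball_self (by positivity), hmem⟩, _, by positivity, key⟩

/-- A nearly convex set has the same relative interior as any convex set it is sandwiched with. -/
theorem ri_eq_of_sandwich {S C : Set E} (hC : Convex ℝ C) (hCS : C ⊆ S) (hSC : S ⊆ closure C) :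
    ri S = ri C := by
  have hspan := affineSpan_eq_of_sandwich hCS hSC
  apply Subset.antisymm
  · intro a ha
    have hne : C.Nonempty := closure_nonempty_iff.1 ⟨a, hSC ha.1⟩
    obtain ⟨c, hc⟩ := ri_nonempty_of_convex hC hne
    obtain ⟨ε, hε, hp⟩ := exists_prolong ha (hCS hc.1)
    have habs : SegAbsorbs (ri C) (closure C) :=
      ⟨fun x hx => subset_closure hx.1,
        fun x hx y hy t ht ht1 => combo_mem_ri_of_convex hC hx hy ht ht1⟩
    exact habs.mem_of_prolong hc hε (hSC (hp ε hε le_rfl))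
  · rintro a ⟨haC, δ, hδ, hball⟩
    exact ⟨hCS haC, δ, hδ, hspan ▸ hball.trans hCS⟩

theorem segAbsorbs_ri {S : Set E} (hS : NearlyConvex S) : SegAbsorbs (ri S) S := by
  obtain ⟨C, hC, hCS, hSC⟩ := hS
  refine ⟨fun x hx => hx.1, fun a ha b hb t ht ht1 => ?_⟩
  rw [ri_eq_of_sandwich hC hCS hSC] at ha ⊢
  exact combo_mem_ri_of_convex hC ha (hSC hb) ht ht1

theorem ri_nonempty_s6 {S : Set E} (hS : NearlyConvex S) (hne : S.Nonempty) : (ri S).Nonempty := by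
  obtain ⟨C, hC, hCS, hSC⟩ := hS
  rw [ri_eq_of_sandwich hC hCS hSC]
  exact ri_nonempty_of_convex hC (closure_nonempty_iff.1 (hne.mono hSC))

theorem mem_ri_of_prolong {S : Set E} (hS : NearlyConvex S) {a : E} (ha : a ∈ S)
    (h : ∀ b ∈ S, ∃ ε > (0 : ℝ), a + ε • (a - b) ∈ S) : a ∈ ri S := by
  obtain ⟨b, hb⟩ := ri_nonempty_s6 hS ⟨a, ha⟩
  obtain ⟨ε, hε, hab⟩ := h b hb.1
  exact (segAbsorbs_ri hS).mem_of_prolong hb hε hab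

end NearlyConvexSets

section SetValued

variable {E P : Type*} [NormedAddCommGroup E] [NormedSpace ℝ E]
  [NormedAddCommGroup P] [NormedSpace ℝ P]

theorem nearlyConvex_domSV {F : E → Set P} (hF : NearlyConvex (gph F)) :
    NearlyConvex (domSV F) := by
  obtain ⟨C, hC, hCS, hSC⟩ := hF
  refine ⟨Prod.fst '' C, hC.linear_image (LinearMap.fst ℝ E P), ?_, ?_⟩
  · rintro _ ⟨q, hq, rfl⟩
    exact ⟨q.2, hCS hq⟩
  · rintro x ⟨y, hy⟩
    exact image_closure_subset_closure_image continuous_fst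
      ⟨(x, y), hSC (show (x, y) ∈ gph F from hy), rfl⟩

variable [FiniteDimensional ℝ E] [FiniteDimensional ℝ P]

/-- Every point of `ri (dom F)` is the projection of a point of `ri (gph F)`. -/
theorem exists_mem_ri_gph {F : E → Set P} (hF : NearlyConvex (gph F)) {x : E}
    (hx : x ∈ ri (domSV F)) : ∃ y, (x, y) ∈ ri (gph F) := by
  obtain ⟨y₁, hy₁⟩ := hx.1
  obtain ⟨⟨x₀, y₀⟩, h₀⟩ := ri_nonempty_s6 hF ⟨(x, y₁), hy₁⟩
  obtain ⟨ε, hε, hp⟩ := exists_prolong hx (⟨y₀, h₀.1⟩ : x₀ ∈ domSV F)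
  obtain ⟨z, hz⟩ := hp ε hε le_rfl
  -- `y` is the point for which prolonging from `(x₀, y₀)` through `(x, y)` ends at height `z`.
  refine ⟨(1 + ε)⁻¹ • (z + ε • y₀), (segAbsorbs_ri hF).mem_of_prolong h₀ hε ?_⟩
  have e : (1 + ε)⁻¹ • (z + ε • y₀) + ε • ((1 + ε)⁻¹ • (z + ε • y₀) - y₀) = z := by
    have h2 : (1 + ε) • (1 + ε)⁻¹ • (z + ε • y₀) = z + ε • y₀ := by
      rw [smul_smul, mul_inv_cancel₀ (by positivity), one_smul]
    rw [add_smul, one_smul] at h2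
    rw [smul_sub, ← add_sub_assoc, h2, add_sub_cancel_right]
  show _ + ε • (_ - y₀) ∈ F (x + ε • (x - x₀))
  rwa [e]

theorem mem_ri_gph_iff {F : E → Set P} (hF : NearlyConvex (gph F)) (x : E) (y : P) :
    (x, y) ∈ ri (gph F) ↔ x ∈ ri (domSV F) ∧ y ∈ ri (F x) := by
  constructor
  · intro h
    have hfib : SegAbsorbs {y | (x, y) ∈ ri (gph F)} (F x) := by
      refine ⟨fun z hz => hz.1, fun a ha b hb t ht ht1 => ?_⟩
      have := (segAbsorbs_ri hF).2 (x, a) ha (x, b) hb t ht ht1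
      rwa [Prod.smul_mk, Prod.smul_mk, Prod.mk_add_mk, ← add_smul, add_sub_cancel, one_smul]
        at this
    refine ⟨mem_ri_of_prolong (nearlyConvex_domSV hF) ⟨y, h.1⟩ ?_,
      mem_ri_of_prolong (hfib.nearlyConvex ⟨y, h⟩) h.1 ?_⟩
    · rintro x' ⟨y', hy'⟩
      obtain ⟨ε, hε, hp⟩ := exists_prolong h (show (x', y') ∈ gph F from hy')
      exact ⟨ε, hε, _, hp ε hε le_rfl⟩
    · intro y' hy'
      obtain ⟨ε, hε, hp⟩ := exists_prolong h (show (x, y') ∈ gph F from hy')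
      refine ⟨ε, hε, ?_⟩
      have : y + ε • (y - y') ∈ F (x + ε • (x - x)) := hp ε hε le_rfl
      simpa using this
  · rintro ⟨hx, hy⟩
    obtain ⟨y₀, h₀⟩ := exists_mem_ri_gph hF hx
    obtain ⟨ε, hε, hp⟩ := exists_prolong hy h₀.1
    refine (segAbsorbs_ri hF).mem_of_prolong h₀ hε ?_
    show y + ε • (y - y₀) ∈ F (x + ε • (x - x))
    simpa using hp ε hε le_rfl

end SetValued

theorem restriction_nearlyConvex (n p : ℕ)
    (F : EuclideanSpace ℝ (Fin n) → Set (EuclideanSpace ℝ (Fin p)))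
    (Ω : Set (EuclideanSpace ℝ (Fin n)))
    (hF : NearlyConvex (gph F)) (hΩ : NearlyConvex Ω)
    (hqc : (ri (domSV F) ∩ ri Ω).Nonempty) :
    NearlyConvex (gph (fun x => {y | x ∈ Ω ∧ y ∈ F x})) ∧
      ri (gph (fun x => {y | x ∈ Ω ∧ y ∈ F x})) =
        {q : EuclideanSpace ℝ (Fin n) × EuclideanSpace ℝ (Fin p) |
          q.1 ∈ ri (domSV F) ∩ ri Ω ∧ q.2 ∈ ri (F q.1)} := by
  set G := gph (fun x => {y | x ∈ Ω ∧ y ∈ F x}) with hG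
  have habs : SegAbsorbs {q | q ∈ ri (gph F) ∧ q.1 ∈ ri Ω} G := by
    refine ⟨fun q hq => ⟨hq.2.1, hq.1.1⟩, fun a ha b hb t ht ht1 => ⟨?_, ?_⟩⟩
    · exact (segAbsorbs_ri hF).2 a ha.1 b hb.2 t ht ht1
    · exact (segAbsorbs_ri hΩ).2 a.1 ha.2 b.1 hb.1 t ht ht1
  obtain ⟨x₀, hx₀, hx₀Ω⟩ := hqc
  obtain ⟨y₀, h₀⟩ := exists_mem_ri_gph hF hx₀
  have hNC : NearlyConvex G := habs.nearlyConvex ⟨(x₀, y₀), h₀, hx₀Ω⟩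
  refine ⟨hNC, ?_⟩
  ext ⟨x, y⟩
  have hiff := mem_ri_gph_iff hF x y
  constructor
  · intro h
    obtain ⟨ε, hε, hp⟩ := exists_prolong h (habs.1 ⟨h₀, hx₀Ω⟩ : (x₀, y₀) ∈ G)
    obtain ⟨h1, h2⟩ := habs.mem_of_prolong ⟨h₀, hx₀Ω⟩ hε (hp ε hε le_rfl)
    exact ⟨⟨(hiff.1 h1).1, h2⟩, (hiff.1 h1).2⟩
  · rintro ⟨⟨hx, hxΩ⟩, hy⟩
    have hq := hiff.2 ⟨hx, hy⟩
    refine mem_ri_of_prolong hNC ⟨hxΩ.1, hq.1⟩ fun b hb => ?_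
    obtain ⟨ε₁, hε₁, hp₁⟩ := exists_prolong hq (hb.2 : b ∈ gph F)
    obtain ⟨ε₂, hε₂, hp₂⟩ := exists_prolong hxΩ hb.1
    have hε := lt_min hε₁ hε₂
    exact ⟨min ε₁ ε₂, hε, hp₂ _ hε (min_le_right _ _), hp₁ _ hε (min_le_left _ _)⟩
end
end
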